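/- Let n ≥ 1, let 0 < s ≤ t and let q₁, q₂ satisfy either 0 < q₂ ≤ q₁ < 1 or q₂ ≤ q₁ < 0, together with (q₂ − 1)/(q₁ − 1) = t/s. Then for every measurable function f : ℝ^n → ℝ with 0 < a ≤ f ≤ b for some constants a, b, and every x ∈ ℝ^n, ( P_t( f^{q₁} )(x) )^{1/q₁} ≤ ( P_s( (P_{t−s} f)^{q₂} )(x) )^{1/q₂}, where P_0 g = g (local reverse hypercontractivity of the heat semigroup under CD(0,∞)). -/

import Mathlib

open MeasureTheory Real

/-- Euclidean heat semigroup, with `heat n 0 f = f`. -/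
noncomputable def heat (n : ℕ) (t : ℝ) (f : EuclideanSpace ℝ (Fin n) → ℝ)
    (x : EuclideanSpace ℝ (Fin n)) : ℝ :=
  if t = 0 then f x
  else (4 * π * t) ^ (-(n : ℝ) / 2) * ∫ y, f y * Real.exp (-‖x - y‖ ^ 2 / (4 * t))

open ProbabilityTheory Filter Topology Set
open scoped NNReal

/-!
Let `(X, Y)` be a centered Gaussian vector and let `Φ` be a function of two real variables whose
Hessian `D²Φ` satisfies `E[D²Φ (a X, b Y)²] ≥ 0` at every point for all linear forms `a`, `b`. Then
`Φ(E F(X), E G(Y)) ≤ E Φ(F(X), G(Y))`. Indeed, for smooth `F`, `G` a second order Taylor expansion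
gives this for the vector `ε (X, Y)`, started at any point, up to an error `O(ε³)`; smoothing by a
Gaussian preserves the bounds on the derivatives of `F` and `G`, so by stability of Gaussian laws
the estimate can be iterated `N²` times with `ε = 1 / N`, with total error `O(1 / N)`. Bounded
measurable `F`, `G` follow by approximation.

Let `x + X` and `x + Y` be the positions at times `t` and `s` of the Brownian motion with generator
`Δ` started at `x`. For `Φ(u, v) = u ^ α * v ^ β` with `α = 1 / q₁` and `β = 1 - 1 / q₂` the Hessian
condition is the nonnegativity of a quadratic form, whose discriminant vanishes because `(q₂ - 1) /
(q₁ - 1) = t / s`. Taking `F = f ^ q₁` and `G = h ^ q₂`, translated by `x`, with `h = P_{t-s} f`,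
the Markov property turns `E Φ(F(X), G(Y))` into `P_s (h * (h ^ q₂) ^ β)`, which is `P_s (h ^ q₂)`,
and the inequality reads `(P_t f ^ q₁) ^ (1 / q₁) * (P_s h ^ q₂) ^ (1 - 1 / q₂) ≤ P_s h ^ q₂` at
`x`.
-/

section Taylor

variable {V F : Type*} [NormedAddCommGroup V] [NormedSpace ℝ V] [NormedAddCommGroup F]
  [NormedSpace ℝ F]

lemma norm_sub_le_mul_norm_pow_succ {s : Set V} (hs : Convex ℝ s) {f : V → F} {f' : V → V →L[ℝ] F}
    {C : ℝ} {k : ℕ} (hC : 0 ≤ C) {z : V} (hz : z ∈ s) (hf : ∀ y ∈ s, HasFDerivAt f (f' y) y)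
    (hf' : ∀ y ∈ s, ‖f' y‖ ≤ C * ‖y - z‖ ^ k) {y : V} (hy : y ∈ s) :
    ‖f y - f z‖ ≤ C * ‖y - z‖ ^ (k + 1) := by
  have hsub : segment ℝ z y ⊆ s := hs.segment_subset hz hy
  calc ‖f y - f z‖ ≤ C * ‖y - z‖ ^ k * ‖y - z‖ :=
        (convex_segment z y).norm_image_sub_le_of_norm_hasFDerivWithin_le
          (fun x hx => (hf x (hsub hx)).hasFDerivWithinAt)
          (fun x hx => (hf' x (hsub hx)).trans (by gcongr; exact norm_sub_le_of_mem_segment hx))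
          (left_mem_segment ℝ _ _) (right_mem_segment ℝ _ _)
    _ = C * ‖y - z‖ ^ (k + 1) := by ring

lemma norm_taylor_one_remainder_le {s : Set V} (hs : Convex ℝ s) {f : V → F} {L : ℝ≥0}
    (hf : ∀ y ∈ s, DifferentiableAt ℝ f y) (hf' : LipschitzOnWith L (fderiv ℝ f) s)
    {z y : V} (hz : z ∈ s) (hy : y ∈ s) :
    ‖f y - f z - fderiv ℝ f z (y - z)‖ ≤ L * ‖y - z‖ ^ 2 := by
  have h := norm_sub_le_mul_norm_pow_succ hs (f := fun x => f x - fderiv ℝ f z x) (k := 1)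
    L.2 hz (fun x hx => (hf x hx).hasFDerivAt.sub (fderiv ℝ f z).hasFDerivAt)
    (fun x hx => by simpa using hf'.norm_sub_le hx hz) hy
  rwa [sub_sub_sub_comm, ← map_sub] at h

lemma exists_lipschitzOnWith_fderiv {K : Set V} (hK : IsCompact K) (hKc : Convex ℝ K) {f : V → F}
    (hf : ∀ z ∈ K, ContDiffAt ℝ 2 f z) : ∃ L : ℝ≥0, LipschitzOnWith L (fderiv ℝ f) K :=
  ContDiffOn.exists_lipschitzOnWith (n := 1)
    (fun z hz => ((hf z hz).fderiv_right le_rfl).contDiffWithinAt) one_ne_zero hKc hK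

lemma exists_norm_taylor_two_remainder_le {K : Set V} (hK : IsCompact K) (hKc : Convex ℝ K)
    {f : V → F} (hf : ∀ z ∈ K, ContDiffAt ℝ 3 f z) :
    ∃ L : ℝ≥0, ∀ z ∈ K, ∀ y ∈ K,
      ‖f y - f z - fderiv ℝ f z (y - z) - (2⁻¹ : ℝ) • fderiv ℝ (fderiv ℝ f) z (y - z) (y - z)‖
        ≤ L * ‖y - z‖ ^ 3 := by
  have hf' : ∀ z ∈ K, ContDiffAt ℝ 2 (fderiv ℝ f) z := fun z hz => (hf z hz).fderiv_right le_rfl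
  obtain ⟨L, hL⟩ := exists_lipschitzOnWith_fderiv hK hKc hf'
  refine ⟨L, fun z hz y hy => ?_⟩
  set T := fderiv ℝ (fderiv ℝ f) z
  have hsymm : ∀ u v, T u v = T v u :=
    ((hf z hz).isSymmSndFDerivAt (by simp; norm_num)).eq
  have hderiv : ∀ x ∈ K, HasFDerivAt
      (fun x => f x - fderiv ℝ f z x - (2⁻¹ : ℝ) • T (x - z) (x - z))
      (fderiv ℝ f x - fderiv ℝ f z - T (x - z)) x := fun x hx => by
    have hsub : HasFDerivAt (fun x => x - z) (ContinuousLinearMap.id ℝ V) x :=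
      (hasFDerivAt_id x).sub_const z
    have hquad := (T.hasFDerivAt_of_bilinear hsub hsub).const_smul (2⁻¹ : ℝ)
    convert! (((hf x hx).differentiableAt (by simp)).hasFDerivAt.sub
      (fderiv ℝ f z).hasFDerivAt).sub hquad using 1
    ext v
    simp [hsymm v, ← two_smul ℝ, smul_smul]
  have h := norm_sub_le_mul_norm_pow_succ hKc L.coe_nonneg hz hderiv (fun x hx =>
    norm_taylor_one_remainder_le hKc (fun x hx => (hf' x hx).differentiableAt (by simp)) hL hz hx)
    hy
  convert h using 2
  simp only [sub_self, map_zero, map_sub, smul_zero, sub_zero]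
  abel

lemma norm_bilin_self_sub_le (T : V →L[ℝ] V →L[ℝ] F) (x v : V) :
    ‖T x x - T v v‖ ≤ ‖T‖ * ‖x - v‖ * (‖x‖ + ‖v‖) := by
  calc ‖T x x - T v v‖ = ‖T (x - v) x + T v (x - v)‖ := by simp
    _ ≤ ‖T (x - v) x‖ + ‖T v (x - v)‖ := norm_add_le _ _
    _ ≤ ‖T‖ * ‖x - v‖ * ‖x‖ + ‖T‖ * ‖v‖ * ‖x - v‖ :=
      add_le_add (T.le_opNorm₂ _ _) (T.le_opNorm₂ _ _)
    _ = ‖T‖ * ‖x - v‖ * (‖x‖ + ‖v‖) := by ring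

end Taylor

section BoundedC11

variable {W V : Type*} [NormedAddCommGroup W] [NormedSpace ℝ W] [NormedAddCommGroup V]
  [NormedSpace ℝ V]

/-- Differentiable maps with values in `K` whose derivative lies in `S`, is bounded by `M` and is
`M`-Lipschitz. The role of `S` is to record a block structure of the derivative. -/
structure BoundedC11 (K : Set V) (S : Submodule ℝ (W →L[ℝ] V)) (M : ℝ≥0) (Ψ : W → V) : Prop where
  mem : ∀ y, Ψ y ∈ K
  differentiable : Differentiable ℝ Ψ
  fderiv_mem : ∀ y, fderiv ℝ Ψ y ∈ S
  norm_fderiv_le : ∀ y, ‖fderiv ℝ Ψ y‖ ≤ M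
  lipschitz_fderiv : LipschitzWith M (fderiv ℝ Ψ)

namespace BoundedC11

variable {K : Set V} {S : Submodule ℝ (W →L[ℝ] V)} {M : ℝ≥0} {Ψ : W → V}

lemma continuous (hΨ : BoundedC11 K S M Ψ) : Continuous Ψ :=
  hΨ.differentiable.continuous

lemma norm_sub_le (hΨ : BoundedC11 K S M Ψ) (y h : W) : ‖Ψ (y + h) - Ψ y‖ ≤ M * ‖h‖ := by
  simpa using convex_univ.norm_image_sub_le_of_norm_fderiv_le (𝕜 := ℝ)
    (fun x _ => hΨ.differentiable x) (fun x _ => hΨ.norm_fderiv_le x) (mem_univ y)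
    (mem_univ (y + h))

lemma norm_sub_sub_fderiv_le (hΨ : BoundedC11 K S M Ψ) (y h : W) :
    ‖Ψ (y + h) - Ψ y - fderiv ℝ Ψ y h‖ ≤ M * ‖h‖ ^ 2 := by
  simpa using norm_taylor_one_remainder_le convex_univ (fun x _ => hΨ.differentiable x)
    hΨ.lipschitz_fderiv.lipschitzOnWith (mem_univ y) (mem_univ (y + h))

end BoundedC11

lemma exists_boundedC11_const_add {g : W → V} (hg : ContDiff ℝ 2 g) (hgc : HasCompactSupport g)
    {K : Set V} {d : V} (hmem : ∀ y, d + g y ∈ K) :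
    ∃ M, BoundedC11 K ⊤ M fun y => d + g y := by
  have hg' : ContDiff ℝ 1 (fderiv ℝ g) := hg.fderiv_right le_rfl
  obtain ⟨B, hB⟩ := (hgc.fderiv ℝ).exists_bound_of_continuous hg'.continuous
  obtain ⟨D, hD⟩ := hg'.lipschitzWith_of_hasCompactSupport (hgc.fderiv ℝ) one_ne_zero
  refine ⟨max B.toNNReal D, hmem, (hg.differentiable two_ne_zero).const_add d,
    fun _ => Submodule.mem_top, fun y => ?_, ?_⟩
  · rw [fderiv_const_add]
    exact (hB y).trans ((le_coe_toNNReal B).trans (NNReal.coe_le_coe.2 (le_max_left _ _)))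
  · have hfd : fderiv ℝ (fun y => d + g y) = fderiv ℝ g := funext fun y => fderiv_const_add d
    rw [hfd]
    exact hD.weaken (le_max_right _ _)

lemma norm_continuousLinearMap_prodMap_le {W₁ W₂ V₁ V₂ : Type*} [NormedAddCommGroup W₁]
    [NormedSpace ℝ W₁] [NormedAddCommGroup W₂] [NormedSpace ℝ W₂] [NormedAddCommGroup V₁]
    [NormedSpace ℝ V₁] [NormedAddCommGroup V₂] [NormedSpace ℝ V₂] (A : W₁ →L[ℝ] V₁)
    (B : W₂ →L[ℝ] V₂) : ‖A.prodMap B‖ ≤ max ‖A‖ ‖B‖ :=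
  ContinuousLinearMap.opNorm_le_bound _ (by positivity) fun w => max_le
    ((A.le_opNorm w.1).trans (by gcongr; exacts [le_max_left _ _, norm_fst_le w]))
    ((B.le_opNorm w.2).trans (by gcongr; exacts [le_max_right _ _, norm_snd_le w]))

lemma BoundedC11.prodMap {W₁ W₂ V₁ V₂ : Type*} [NormedAddCommGroup W₁] [NormedSpace ℝ W₁]
    [NormedAddCommGroup W₂] [NormedSpace ℝ W₂] [NormedAddCommGroup V₁] [NormedSpace ℝ V₁]
    [NormedAddCommGroup V₂] [NormedSpace ℝ V₂] {K₁ : Set V₁} {K₂ : Set V₂}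
    {S₁ : Submodule ℝ (W₁ →L[ℝ] V₁)} {S₂ : Submodule ℝ (W₂ →L[ℝ] V₂)} {M₁ M₂ : ℝ≥0} {F : W₁ → V₁}
    {G : W₂ → V₂} (hF : BoundedC11 K₁ S₁ M₁ F) (hG : BoundedC11 K₂ S₂ M₂ G) :
    BoundedC11 (K₁ ×ˢ K₂)
      ((S₁.prod S₂).map (ContinuousLinearMap.prodMapL ℝ W₁ V₁ W₂ V₂ : _ →ₗ[ℝ] _))
      (max M₁ M₂) (Prod.map F G) := by
  have hderiv (w : W₁ × W₂) : HasFDerivAt (Prod.map F G)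
      ((fderiv ℝ F w.1).prodMap (fderiv ℝ G w.2)) w :=
    (hF.differentiable w.1).hasFDerivAt.prodMap w (hG.differentiable w.2).hasFDerivAt
  have hfd : fderiv ℝ (Prod.map F G) =
      fun w => (fderiv ℝ F w.1).prodMap (fderiv ℝ G w.2) := funext fun w => (hderiv w).fderiv
  refine ⟨fun w => ⟨hF.mem w.1, hG.mem w.2⟩, fun w => (hderiv w).differentiableAt, fun w => ?_,
    fun w => ?_, LipschitzWith.of_dist_le_mul fun w w' => ?_⟩
  · rw [hfd]
    exact ⟨(_, _), ⟨hF.fderiv_mem w.1, hG.fderiv_mem w.2⟩, rfl⟩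
  · rw [hfd, NNReal.coe_max]
    exact (norm_continuousLinearMap_prodMap_le _ _).trans
      (max_le_max (hF.norm_fderiv_le w.1) (hG.norm_fderiv_le w.2))
  · have hsub : fderiv ℝ (Prod.map F G) w - fderiv ℝ (Prod.map F G) w' =
        (fderiv ℝ F w.1 - fderiv ℝ F w'.1).prodMap (fderiv ℝ G w.2 - fderiv ℝ G w'.2) := by
      rw [hfd]
      rfl
    rw [dist_eq_norm, dist_eq_norm, hsub, NNReal.coe_max]
    exact (norm_continuousLinearMap_prodMap_le _ _).trans (max_le
      ((hF.lipschitz_fderiv.norm_sub_le _ _).trans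
        (by gcongr; exacts [le_max_left _ _, norm_fst_le (w - w')]))
      ((hG.lipschitz_fderiv.norm_sub_le _ _).trans
        (by gcongr; exacts [le_max_right _ _, norm_snd_le (w - w')])))

end BoundedC11

section Smoothing

variable {W V : Type*} [NormedAddCommGroup W] [NormedSpace ℝ W] [MeasurableSpace W]
  [NormedAddCommGroup V]

lemma integrable_of_forall_mem_isBounded {Ω : Type*} [MeasurableSpace Ω] {μ : Measure Ω}
    [IsFiniteMeasure μ] {K : Set V} (hK : Bornology.IsBounded K) {g : Ω → V}
    (hg : AEStronglyMeasurable g μ) (hmem : ∀ w, g w ∈ K) : Integrable g μ := by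
  obtain ⟨C, hC⟩ := hK.exists_norm_le
  exact Integrable.of_bound hg C (ae_of_all _ fun w => hC _ (hmem w))

variable {ν : Measure W} {r : ℝ} {f : W → V} {K : Set V}

lemma stronglyMeasurable_translate [BorelSpace W] (hf : StronglyMeasurable f) (y : W) :
    StronglyMeasurable fun w => f (y + r • w) :=
  hf.comp_measurable (by fun_prop)

lemma integrable_translate [BorelSpace W] [IsFiniteMeasure ν] (hK : Bornology.IsBounded K)
    (hf : StronglyMeasurable f) (hmem : ∀ y, f y ∈ K) (y : W) :
    Integrable (fun w => f (y + r • w)) ν :=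
  integrable_of_forall_mem_isBounded hK (stronglyMeasurable_translate hf y).aestronglyMeasurable
    fun _ => hmem _

lemma integrable_comp_translate {F : Type*} [NormedAddCommGroup F] [BorelSpace W]
    [SecondCountableTopology W] [IsFiniteMeasure ν] (hK : IsCompact K) {Φ : V → F}
    (hΦ : ContinuousOn Φ K) (hf : Continuous f) (hmem : ∀ y, f y ∈ K) (y : W) :
    Integrable (fun w => Φ (f (y + r • w))) ν :=
  integrable_translate (hK.image_of_continuousOn hΦ).isBounded
    (hΦ.comp_continuous hf hmem).stronglyMeasurable (fun y => mem_image_of_mem Φ (hmem y)) y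

variable [NormedSpace ℝ V]

/-- `smoothing ν r f y` is the mean of `f` at `y` displaced by `r` times a random vector with law
`ν`. When `ν` is a centered Gaussian measure this is the semigroup of `ν` at time `r ^ 2`. -/
noncomputable def smoothing (ν : Measure W) (r : ℝ) (f : W → V) (y : W) : V :=
  ∫ w, f (y + r • w) ∂ν

lemma smoothing_one_zero (f : W → V) : smoothing ν 1 f 0 = ∫ w, f w ∂ν := by
  simp [smoothing]

lemma smoothing_zero [CompleteSpace V] [IsProbabilityMeasure ν] (f : W → V) :
    smoothing ν 0 f = f := by
  ext
  simp [smoothing]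

variable [BorelSpace W]

lemma smoothing_mem [CompleteSpace V] [IsProbabilityMeasure ν] (hKc : Convex ℝ K)
    (hK : IsClosed K) (hKb : Bornology.IsBounded K) (hf : StronglyMeasurable f)
    (hmem : ∀ y, f y ∈ K) (y : W) : smoothing ν r f y ∈ K :=
  hKc.integral_mem hK (ae_of_all _ fun _ => hmem _) (integrable_translate hKb hf hmem y)

variable [SecondCountableTopology W]

lemma stronglyMeasurable_smoothing [SFinite ν] (hf : StronglyMeasurable f) :
    StronglyMeasurable (smoothing ν r f) := by
  have h : StronglyMeasurable fun v : W × W => f (v.1 + r • v.2) :=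
    hf.comp_measurable (by fun_prop)
  exact h.integral_prod_right

lemma smoothing_smoothing [CompleteSpace W] [IsGaussian ν] (hν : ∫ w, w ∂ν = 0)
    (hK : Bornology.IsBounded K) (hf : StronglyMeasurable f) (hmem : ∀ y, f y ∈ K) (r₁ r₂ : ℝ) :
    smoothing ν r₁ (smoothing ν r₂ f) = smoothing ν √(r₁ ^ 2 + r₂ ^ 2) f := by
  ext y
  set ζ : ℂ := ⟨r₁, r₂⟩
  set r := √(r₁ ^ 2 + r₂ ^ 2)
  have hr : r = ‖ζ‖ := by rw [Complex.norm_eq_sqrt_sq_add_sq]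
  have hcos : r₁ = r * Real.cos ζ.arg := by rw [hr, Complex.norm_mul_cos_arg]
  have hsin : r₂ = r * Real.sin ζ.arg := by rw [hr, Complex.norm_mul_sin_arg]
  have hmeas {φ : W × W → W} (hφ : Measurable φ) (ρ : Measure (W × W)) :
      AEStronglyMeasurable (fun v => f (φ v)) ρ :=
    (hf.comp_measurable hφ).aestronglyMeasurable
  calc ∫ w, ∫ z, f (y + r₁ • w + r₂ • z) ∂ν ∂ν
      = ∫ v, f (y + r₁ • v.1 + r₂ • v.2) ∂ν.prod ν :=
        integral_integral (f := fun w z => f (y + r₁ • w + r₂ • z))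
          (integrable_of_forall_mem_isBounded hK (hmeas (by fun_prop) _) fun _ => hmem _)
    _ = ∫ v, f (y + r • v.1) ∂ν.prod ν := by
        conv_rhs => rw [← IsGaussian.map_rotation_eq_self hν ζ.arg]
        rw [integral_map (by fun_prop) (hmeas (by fun_prop) _)]
        simp only [ContinuousLinearMap.rotation_apply, smul_add, smul_smul, ← hcos, ← hsin,
          add_assoc]
    _ = ∫ w, f (y + r • w) ∂ν := by
        simpa using integral_fun_fst (μ := ν) (ν := ν) fun w => f (y + r • w)

lemma boundedC11_smoothing [CompleteSpace V] [IsProbabilityMeasure ν] (hKc : Convex ℝ K)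
    (hK : IsClosed K) (hKb : Bornology.IsBounded K) {S : Submodule ℝ (W →L[ℝ] V)}
    (hS : IsClosed (S : Set (W →L[ℝ] V))) {M : ℝ≥0} {Ψ : W → V} (hΨ : BoundedC11 K S M Ψ) (r : ℝ) :
    BoundedC11 K S M (smoothing ν r Ψ) := by
  have hmeas : StronglyMeasurable Ψ := hΨ.continuous.stronglyMeasurable
  have hmeas' : StronglyMeasurable (fderiv ℝ Ψ) := hΨ.lipschitz_fderiv.continuous.stronglyMeasurable
  have hint' : ∀ y, Integrable (fun w => fderiv ℝ Ψ (y + r • w)) ν :=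
    integrable_translate (Metric.isBounded_closedBall (x := 0)) hmeas'
      fun y => mem_closedBall_zero_iff.2 (hΨ.norm_fderiv_le y)
  have hderiv (y : W) : HasFDerivAt (smoothing ν r Ψ)
      (∫ w, fderiv ℝ Ψ (y + r • w) ∂ν) y :=
    hasFDerivAt_integral_of_dominated_of_fderiv_le (bound := fun _ => (M : ℝ))
      (F' := fun y w => fderiv ℝ Ψ (y + r • w)) univ_mem
      (Eventually.of_forall fun y => (stronglyMeasurable_translate hmeas y).aestronglyMeasurable)
      (integrable_translate hKb hmeas hΨ.mem y) (hint' y).aestronglyMeasurable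
      (ae_of_all _ fun _ _ _ => hΨ.norm_fderiv_le _) (integrable_const _)
      (ae_of_all _ fun w _ _ =>
        (hasFDerivAt_comp_add_right (r • w)).2 (hΨ.differentiable _).hasFDerivAt)
  have hfd (y : W) := (hderiv y).fderiv
  refine ⟨smoothing_mem hKc hK hKb hmeas hΨ.mem, fun y => (hderiv y).differentiableAt,
    fun y => ?_, fun y => ?_, LipschitzWith.of_dist_le_mul fun y y' => ?_⟩
  · rw [hfd]
    exact S.convex.integral_mem hS (ae_of_all _ fun _ => hΨ.fderiv_mem _) (hint' y)
  · rw [hfd]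
    simpa using norm_integral_le_of_norm_le_const (μ := ν)
      (ae_of_all _ fun w => hΨ.norm_fderiv_le (y + r • w))
  · rw [hfd, hfd, dist_eq_norm, ← integral_sub (hint' y) (hint' y')]
    simpa using norm_integral_le_of_norm_le_const (μ := ν) (ae_of_all _ fun w =>
      (hΨ.lipschitz_fderiv.norm_sub_le (y + r • w) (y' + r • w)).trans_eq
        (by rw [add_sub_add_right_eq_sub, dist_eq_norm]))

end Smoothing

section CorrelatedJensen

variable {W V : Type*} [NormedAddCommGroup W] [NormedSpace ℝ W] [NormedAddCommGroup V]
  [NormedSpace ℝ V] {K : Set V} {S : Submodule ℝ (W →L[ℝ] V)} {M : ℝ≥0}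

lemma exists_taylor_two_comp_le {Φ : V → ℝ} (hK : IsCompact K) (hKc : Convex ℝ K)
    (hΦ : ∀ z ∈ K, ContDiffAt ℝ 3 Φ z) (M : ℝ≥0) :
    ∃ B : ℝ≥0, ∀ Ψ : W → V, BoundedC11 K S M Ψ → ∀ y h,
      Φ (Ψ y) + fderiv ℝ Φ (Ψ y) (Ψ (y + h) - Ψ y) +
        2⁻¹ * fderiv ℝ (fderiv ℝ Φ) (Ψ y) (fderiv ℝ Ψ y h) (fderiv ℝ Ψ y h) - B * ‖h‖ ^ 3
      ≤ Φ (Ψ (y + h)) := by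
  obtain ⟨L, hL⟩ := exists_norm_taylor_two_remainder_le hK hKc hΦ
  have hcont : ContinuousOn (fderiv ℝ (fderiv ℝ Φ)) K := fun z hz =>
    (((hΦ z hz).fderiv_right (m := 2) le_rfl).fderiv_right (m := 1)
      le_rfl).continuousAt.continuousWithinAt
  obtain ⟨T, hT⟩ := hK.exists_bound_of_continuousOn (E := V →L[ℝ] V →L[ℝ] ℝ) hcont
  refine ⟨L * M ^ 3 + T.toNNReal * M ^ 2, fun Ψ hΨ y h => ?_⟩
  set D := fderiv ℝ (fderiv ℝ Φ) (Ψ y)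
  set x := Ψ (y + h) - Ψ y
  set v := fderiv ℝ Ψ y h
  have hx : ‖x‖ ≤ M * ‖h‖ := hΨ.norm_sub_le y h
  have hv : ‖v‖ ≤ M * ‖h‖ := (fderiv ℝ Ψ y).le_of_opNorm_le (hΨ.norm_fderiv_le y) h
  have hquad : ‖D x x - D v v‖ ≤ 2 * (T.toNNReal * M ^ 2 * ‖h‖ ^ 3) := calc
    _ ≤ ‖D‖ * ‖x - v‖ * (‖x‖ + ‖v‖) := norm_bilin_self_sub_le D x v
    _ ≤ T.toNNReal * (M * ‖h‖ ^ 2) * (M * ‖h‖ + M * ‖h‖) := by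
      gcongr
      · exact (hT _ (hΨ.mem y)).trans (le_coe_toNNReal T)
      · exact hΨ.norm_sub_sub_fderiv_le y h
    _ = 2 * (T.toNNReal * M ^ 2 * ‖h‖ ^ 3) := by ring
  have htaylor : ‖Φ (Ψ (y + h)) - Φ (Ψ y) - fderiv ℝ Φ (Ψ y) x - (2⁻¹ : ℝ) • D x x‖ ≤
      L * M ^ 3 * ‖h‖ ^ 3 := calc
    _ ≤ L * ‖x‖ ^ 3 := hL _ (hΨ.mem y) _ (hΨ.mem (y + h))
    _ ≤ L * (M * ‖h‖) ^ 3 := by gcongr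
    _ = L * M ^ 3 * ‖h‖ ^ 3 := by ring
  have hlower₁ := neg_le_of_abs_le htaylor
  have hlower₂ := neg_le_of_abs_le hquad
  rw [smul_eq_mul] at hlower₁
  push_cast
  linarith

variable [MeasurableSpace W] {ν : Measure W}

lemma integrable_bilin_self [BorelSpace W] [SecondCountableTopology W] (hν : MemLp id 2 ν)
    (T : W →L[ℝ] W →L[ℝ] ℝ) : Integrable (fun w => T w w) ν := by
  refine Integrable.mono' (hν.integrable_norm_pow two_ne_zero |>.const_mul ‖T‖)
    (by fun_prop) (ae_of_all _ fun w => ?_)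
  simpa only [sq, mul_assoc, id] using T.le_opNorm₂ w w

variable [SecondCountableTopology W] [BorelSpace W] [CompleteSpace V] [IsProbabilityMeasure ν]

lemma integral_add_clm_sub {Ω : Type*} [MeasurableSpace Ω] {μ : Measure Ω}
    [IsProbabilityMeasure μ] {X : Ω → V} (hX : Integrable X μ) (c : ℝ) (P : V →L[ℝ] ℝ) (z : V) :
    ∫ w, (c + P (X w - z)) ∂μ = c + P (∫ w, X w ∂μ - z) := by
  have hXz : Integrable (fun w => X w - z) μ := hX.sub (integrable_const z)
  rw [integral_add (integrable_const c) (P.integrable_comp hXz), P.integral_comp_comm hXz,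
    integral_sub hX (integrable_const z)]
  simp

lemma exists_add_fderiv_le_smoothing_comp {Φ : V → ℝ}
    (hν3 : MemLp id 3 ν) (hK : IsCompact K) (hKc : Convex ℝ K) (hΦ : ∀ z ∈ K, ContDiffAt ℝ 3 Φ z)
    (hQ : ∀ z ∈ K, ∀ A ∈ S, 0 ≤ ∫ w, fderiv ℝ (fderiv ℝ Φ) z (A w) (A w) ∂ν) (M : ℝ≥0) :
    ∃ B : ℝ≥0, ∀ Ψ : W → V, BoundedC11 K S M Ψ → ∀ ε : ℝ, 0 ≤ ε → ∀ y,
      Φ (Ψ y) + fderiv ℝ Φ (Ψ y) (smoothing ν ε Ψ y - Ψ y) ≤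
        smoothing ν ε (Φ ∘ Ψ) y + B * ε ^ 3 := by
  obtain ⟨B, hB⟩ := exists_taylor_two_comp_le (S := S) hK hKc hΦ M
  have hm3 : 0 ≤ ∫ w, ‖w‖ ^ 3 ∂ν := integral_nonneg fun w => by positivity
  refine ⟨B * (∫ w, ‖w‖ ^ 3 ∂ν).toNNReal, fun Ψ hΨ ε hε y => ?_⟩
  set A := fderiv ℝ Ψ y
  set D := fderiv ℝ (fderiv ℝ Φ) (Ψ y)
  set P := fderiv ℝ Φ (Ψ y)
  have hΨi : Integrable (fun w => Ψ (y + ε • w)) ν :=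
    integrable_translate hK.isBounded hΨ.continuous.stronglyMeasurable hΨ.mem y
  have hlin : Integrable (fun w => Φ (Ψ y) + P (Ψ (y + ε • w) - Ψ y)) ν :=
    (integrable_const _).add (P.integrable_comp (hΨi.sub (integrable_const _)))
  have hquad : Integrable (fun w => D (A w) (A w)) ν :=
    integrable_bilin_self (hν3.mono_exponent (by norm_num)) (D.bilinearComp A A)
  have hcube : Integrable (fun w => ‖w‖ ^ 3) ν := hν3.integrable_norm_pow (by norm_num)
  have hΦc : ContinuousOn Φ K := fun z hz => (hΦ z hz).continuousAt.continuousWithinAt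
  have hΦΨ : Integrable (fun w => Φ (Ψ (y + ε • w))) ν :=
    integrable_comp_translate hK hΦc hΨ.continuous hΨ.mem y
  calc Φ (Ψ y) + P (smoothing ν ε Ψ y - Ψ y)
      ≤ Φ (Ψ y) + P (smoothing ν ε Ψ y - Ψ y) + 2⁻¹ * ε ^ 2 * ∫ w, D (A w) (A w) ∂ν := by
        have := hQ (Ψ y) (hΨ.mem y) A (hΨ.fderiv_mem y)
        exact le_add_of_nonneg_right (by positivity)
    _ = ∫ w, (Φ (Ψ y) + P (Ψ (y + ε • w) - Ψ y) + 2⁻¹ * ε ^ 2 * D (A w) (A w)) ∂ν := by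
        rw [integral_add hlin (hquad.const_mul _), integral_const_mul,
          integral_add_clm_sub hΨi, smoothing]
    _ ≤ ∫ w, (Φ (Ψ (y + ε • w)) + B * ε ^ 3 * ‖w‖ ^ 3) ∂ν := by
        refine integral_mono (hlin.add (hquad.const_mul _)) (hΦΨ.add (hcube.const_mul _))
          fun w => ?_
        have h := hB Ψ hΨ y (ε • w)
        rw [map_smul, map_smul, map_smul, smul_apply, norm_smul,
          norm_of_nonneg hε, smul_eq_mul, smul_eq_mul] at h
        dsimp only
        linarith
    _ = smoothing ν ε (Φ ∘ Ψ) y + B * (∫ w, ‖w‖ ^ 3 ∂ν).toNNReal * ε ^ 3 := by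
        rw [integral_add hΦΨ (hcube.const_mul _), integral_const_mul, coe_toNNReal _ hm3]
        simp only [smoothing, Function.comp_apply]
        ring

variable [CompleteSpace W]

lemma BoundedC11.norm_smoothing_sub_le (hν0 : ∫ w, w ∂ν = 0) (hν2 : MemLp id 2 ν)
    (hK : Bornology.IsBounded K) {Ψ : W → V} (hΨ : BoundedC11 K S M Ψ) (ε : ℝ) (y : W) :
    ‖smoothing ν ε Ψ y - Ψ y‖ ≤ M * ε ^ 2 * ∫ w, ‖w‖ ^ 2 ∂ν := by
  set A := fderiv ℝ Ψ y
  have hid : Integrable (fun w => w) ν := hν2.integrable one_le_two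
  have hA : Integrable (fun w => A (ε • w)) ν := A.integrable_comp (hid.smul ε)
  have hA0 : ∫ w, A (ε • w) ∂ν = 0 := by
    rw [A.integral_comp_comm (φ := fun w => ε • w) (hid.smul ε), integral_smul, hν0, smul_zero,
      map_zero]
  have hΨi : Integrable (fun w => Ψ (y + ε • w)) ν :=
    integrable_translate hK hΨ.continuous.stronglyMeasurable hΨ.mem y
  have hsub : smoothing ν ε Ψ y - Ψ y = ∫ w, (Ψ (y + ε • w) - Ψ y - A (ε • w)) ∂ν := by
    rw [integral_sub (f := fun w => Ψ (y + ε • w) - Ψ y) (hΨi.sub (integrable_const _)) hA, hA0,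
      integral_sub hΨi (integrable_const _)]
    simp [smoothing]
  rw [hsub, ← integral_const_mul]
  refine norm_integral_le_of_norm_le ((hν2.integrable_norm_pow two_ne_zero).const_mul _)
    (ae_of_all _ fun w => (hΨ.norm_sub_sub_fderiv_le y (ε • w)).trans_eq ?_)
  rw [norm_smul, mul_pow, norm_eq_abs, sq_abs, mul_assoc]

lemma exists_map_smoothing_le_add_cube {Φ : V → ℝ} (hν0 : ∫ w, w ∂ν = 0) (hν3 : MemLp id 3 ν)
    (hK : IsCompact K) (hKc : Convex ℝ K) (hΦ : ∀ z ∈ K, ContDiffAt ℝ 3 Φ z)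
    (hQ : ∀ z ∈ K, ∀ A ∈ S, 0 ≤ ∫ w, fderiv ℝ (fderiv ℝ Φ) z (A w) (A w) ∂ν) (M : ℝ≥0) :
    ∃ B : ℝ≥0, ∀ Ψ : W → V, BoundedC11 K S M Ψ → ∀ ε ∈ Icc (0 : ℝ) 1, ∀ y,
      Φ (smoothing ν ε Ψ y) ≤ smoothing ν ε (Φ ∘ Ψ) y + B * ε ^ 3 := by
  obtain ⟨B, hB⟩ := exists_add_fderiv_le_smoothing_comp hν3 hK hKc hΦ hQ M
  obtain ⟨L, hL⟩ := exists_lipschitzOnWith_fderiv hK hKc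
    fun z hz => (hΦ z hz).of_le (by norm_num)
  have hm2 : 0 ≤ ∫ w, ‖w‖ ^ 2 ∂ν := integral_nonneg fun w => by positivity
  refine ⟨L * (M * (∫ w, ‖w‖ ^ 2 ∂ν).toNNReal) ^ 2 + B, fun Ψ hΨ ε ⟨hε0, hε1⟩ y => ?_⟩
  set m := smoothing ν ε Ψ y
  set Q := ∫ w, ‖w‖ ^ 2 ∂ν
  have hm : m ∈ K := smoothing_mem hKc hK.isClosed hK.isBounded
    hΨ.continuous.stronglyMeasurable hΨ.mem y
  have htaylor : ‖Φ m - Φ (Ψ y) - fderiv ℝ Φ (Ψ y) (m - Ψ y)‖ ≤ L * (M * Q) ^ 2 * ε ^ 3 := calc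
    _ ≤ L * ‖m - Ψ y‖ ^ 2 := norm_taylor_one_remainder_le hKc
      (fun z hz => (hΦ z hz).differentiableAt (by simp)) hL (hΨ.mem y) hm
    _ ≤ L * (M * ε ^ 2 * Q) ^ 2 := by
      gcongr
      exact hΨ.norm_smoothing_sub_le hν0 (hν3.mono_exponent (by norm_num)) hK.isBounded ε y
    _ = L * (M * Q) ^ 2 * ε ^ 4 := by ring
    _ ≤ L * (M * Q) ^ 2 * ε ^ 3 := by
      gcongr _ * ?_
      exact pow_le_pow_of_le_one hε0 hε1 (by norm_num)
  have hupper := le_of_abs_le htaylor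
  have hlower := hB Ψ hΨ ε hε0 y
  push_cast
  rw [coe_toNNReal _ hm2]
  linarith

lemma map_smoothing_sqrt_mul_le {ν : Measure W} [IsGaussian ν] (hν : ∫ w, w ∂ν = 0)
    (hK : IsCompact K) (hKc : Convex ℝ K) (hS : IsClosed (S : Set (W →L[ℝ] V))) {Φ : V → ℝ}
    (hΦ : ContinuousOn Φ K) {ε δ : ℝ}
    (hstep : ∀ Ψ : W → V, BoundedC11 K S M Ψ → ∀ y,
      Φ (smoothing ν ε Ψ y) ≤ smoothing ν ε (Φ ∘ Ψ) y + δ)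
    {Ψ : W → V} (hΨ : BoundedC11 K S M Ψ) (k : ℕ) (y : W) :
    Φ (smoothing ν √(k * ε ^ 2) Ψ y) ≤ smoothing ν √(k * ε ^ 2) (Φ ∘ Ψ) y + k * δ := by
  induction k generalizing y with
  | zero => simp [smoothing_zero]
  | succ k ih =>
    set r := √(k * ε ^ 2)
    have hr : √((k + 1 : ℕ) * ε ^ 2) = √(ε ^ 2 + r ^ 2) := by
      rw [Real.sq_sqrt (by positivity)]
      push_cast
      ring_nf
    have hΨm : StronglyMeasurable Ψ := hΨ.continuous.stronglyMeasurable
    have hΨr : BoundedC11 K S M (smoothing ν r Ψ) :=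
      boundedC11_smoothing hKc hK.isClosed hK.isBounded hS hΨ r
    have hΦΨ : StronglyMeasurable (Φ ∘ Ψ) :=
      (hΦ.comp_continuous hΨ.continuous hΨ.mem).stronglyMeasurable
    obtain ⟨C, hC⟩ := (hK.image_of_continuousOn hΦ).isBounded.subset_closedBall 0
    have hmem (y : W) : Φ (Ψ y) ∈ Metric.closedBall 0 C := hC (mem_image_of_mem Φ (hΨ.mem y))
    have hi : Integrable (fun w => smoothing ν r (Φ ∘ Ψ) (y + ε • w)) ν :=
      integrable_translate Metric.isBounded_closedBall (stronglyMeasurable_smoothing hΦΨ)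
        (smoothing_mem (convex_closedBall 0 C) Metric.isClosed_closedBall
          Metric.isBounded_closedBall hΦΨ hmem) y
    rw [hr, ← smoothing_smoothing hν hK.isBounded hΨm hΨ.mem,
      ← smoothing_smoothing hν Metric.isBounded_closedBall hΦΨ hmem]
    calc Φ (smoothing ν ε (smoothing ν r Ψ) y)
        ≤ smoothing ν ε (Φ ∘ smoothing ν r Ψ) y + δ := hstep _ hΨr y
      _ ≤ (∫ w, (smoothing ν r (Φ ∘ Ψ) (y + ε • w) + k * δ) ∂ν) + δ := by
          gcongr
          exact integral_mono (integrable_comp_translate hK hΦ hΨr.continuous hΨr.mem y)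
            (hi.add (integrable_const _)) fun w => ih (y + ε • w)
      _ = smoothing ν ε (smoothing ν r (Φ ∘ Ψ)) y + (k + 1 : ℕ) * δ := by
          rw [integral_add hi (integrable_const _), integral_const, probReal_univ, one_smul,
            smoothing, Nat.cast_succ]
          ring

theorem map_integral_le_of_boundedC11 {ν : Measure W} [IsGaussian ν] (hν : ∫ w, w ∂ν = 0)
    (hK : IsCompact K) (hKc : Convex ℝ K) (hS : IsClosed (S : Set (W →L[ℝ] V))) {Φ : V → ℝ}
    (hΦ : ∀ z ∈ K, ContDiffAt ℝ 3 Φ z)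
    (hQ : ∀ z ∈ K, ∀ A ∈ S, 0 ≤ ∫ w, fderiv ℝ (fderiv ℝ Φ) z (A w) (A w) ∂ν)
    {Ψ : W → V} (hΨ : BoundedC11 K S M Ψ) : Φ (∫ w, Ψ w ∂ν) ≤ ∫ w, Φ (Ψ w) ∂ν := by
  obtain ⟨B, hB⟩ := exists_map_smoothing_le_add_cube hν
    (IsGaussian.memLp_id ν 3 (by simp)) hK hKc hΦ hQ M
  have hΦc : ContinuousOn Φ K := fun z hz => (hΦ z hz).continuousAt.continuousWithinAt
  have hN (N : ℕ) (hN : 1 ≤ N) : Φ (∫ w, Ψ w ∂ν) ≤ ∫ w, Φ (Ψ w) ∂ν + B / N := by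
    have hN' : (1 : ℝ) ≤ N := by exact_mod_cast hN
    have htime : √((N ^ 2 : ℕ) * (1 / N : ℝ) ^ 2) = 1 := by
      rw [Real.sqrt_eq_one]
      push_cast
      field_simp
    have herror : (N ^ 2 : ℕ) * (B * (1 / N : ℝ) ^ 3) = B / N := by
      push_cast
      field_simp
    have h := map_smoothing_sqrt_mul_le hν hK hKc hS hΦc
      (fun Ψ hΨ => hB Ψ hΨ (1 / N) ⟨by positivity, (div_le_one (by positivity)).2 hN'⟩) hΨ
      (N ^ 2) 0
    rwa [htime, herror, smoothing_one_zero, smoothing_one_zero] at h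
  refine ge_of_tendsto ?_ (eventually_atTop.2 ⟨1, hN⟩)
  simpa using (tendsto_const_div_atTop_nhds_zero_nat (B : ℝ)).const_add (∫ w, Φ (Ψ w) ∂ν)

end CorrelatedJensen

section Approximation

variable {E : Type*} [NormedAddCommGroup E] [NormedSpace ℝ E] [FiniteDimensional ℝ E]
  [MeasurableSpace E] [BorelSpace E] {μ : Measure E} [IsFiniteMeasure μ]

lemma exists_contDiff_tendsto_ae {f : E → ℝ} (hf : MemLp f 1 μ) :
    ∃ g : ℕ → E → ℝ, (∀ j, HasCompactSupport (g j) ∧ ContDiff ℝ 2 (g j)) ∧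
      ∀ᵐ y ∂μ, Tendsto (fun j => g j y) atTop (𝓝 (f y)) := by
  choose g hgc hg hgf using fun j : ℕ =>
    hf.exist_eLpNorm_sub_le ENNReal.one_ne_top le_rfl (ε := 1 / ((j : ℝ) + 1)) (by positivity)
  have hlim : Tendsto (fun j => eLpNorm (g j - f) 1 μ) atTop (𝓝 0) := by
    refine tendsto_of_tendsto_of_tendsto_of_le_of_le tendsto_const_nhds
      (h := fun j : ℕ => ENNReal.ofReal (1 / ((j : ℝ) + 1))) ?_ (fun j => zero_le) fun j => ?_
    · simpa using ENNReal.tendsto_ofReal tendsto_one_div_add_atTop_nhds_zero_nat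
    · rw [eLpNorm_sub_comm]
      exact hgf j
  obtain ⟨ns, -, hns⟩ := (tendstoInMeasure_of_tendsto_eLpNorm one_ne_zero
    (fun j => (hg j).continuous.aestronglyMeasurable) hf.aestronglyMeasurable
    hlim).exists_seq_tendsto_ae
  exact ⟨g ∘ ns, fun j => ⟨hgc _, contDiff_infty.1 (hg _) 2⟩, hns⟩

/- Writing `F = d + ρ * sin H`, any approximation of `H` gives one of `F` which stays in the
same interval. -/
lemma exists_boundedC11_tendsto_ae {c C : ℝ} {F : E → ℝ} (hF : Measurable F)
    (hmem : ∀ y, F y ∈ Icc c C) :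
    ∃ f : ℕ → E → ℝ, (∀ j, ∃ M, BoundedC11 (Icc c C) ⊤ M (f j)) ∧
      ∀ᵐ y ∂μ, Tendsto (fun j => f j y) atTop (𝓝 (F y)) := by
  set d := (c + C) / 2
  set ρ := (C - c) / 2
  have hIcc : Icc c C = Metric.closedBall d ρ := Real.Icc_eq_closedBall c C
  have hFd (y : E) : |F y - d| ≤ ρ := mem_closedBall_iff_norm.1 (hIcc ▸ hmem y)
  have hρ0 : 0 ≤ ρ := (abs_nonneg _).trans (hFd 0)
  set H : E → ℝ := fun y => arcsin ((F y - d) / ρ)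
  have hFH (y : E) : d + ρ * Real.sin (H y) = F y := by
    have hle : |(F y - d) / ρ| ≤ 1 := by
      rw [abs_div, abs_of_nonneg hρ0]
      exact div_le_one_of_le₀ (hFd y) hρ0
    rw [Real.sin_arcsin (abs_le.1 hle).1 (abs_le.1 hle).2,
      mul_div_cancel_of_imp' fun h => abs_nonpos_iff.1 (h ▸ hFd y), add_sub_cancel]
  have hH : MemLp H 1 μ := MemLp.of_bound (by fun_prop) (π / 2) (ae_of_all _ fun y =>
    abs_le.2 ⟨Real.neg_pi_div_two_le_arcsin _, Real.arcsin_le_pi_div_two _⟩)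
  obtain ⟨g, hg, hlim⟩ := exists_contDiff_tendsto_ae hH
  refine ⟨fun j y => d + ρ * Real.sin (g j y), fun j => exists_boundedC11_const_add
    (contDiff_const.mul (Real.contDiff_sin.comp (hg j).2))
    ((hg j).1.comp_left (g := fun u => ρ * Real.sin u) (by simp)) fun y => ?_, ?_⟩
  · rw [hIcc, mem_closedBall_iff_norm, add_sub_cancel_left, norm_mul, norm_of_nonneg hρ0]
    exact mul_le_of_le_one_right hρ0 (Real.abs_sin_le_one _)
  · filter_upwards [hlim] with y hy
    rw [← hFH y]
    exact (((Real.continuous_sin.tendsto _).comp hy).const_mul ρ).const_add d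

lemma tendsto_integral_comp_of_forall_mem {W V F : Type*} [TopologicalSpace W]
    [SecondCountableTopology W] [MeasurableSpace W] [OpensMeasurableSpace W] {ν : Measure W}
    [IsFiniteMeasure ν] [NormedAddCommGroup V] [NormedAddCommGroup F] [NormedSpace ℝ F]
    {K : Set V} (hK : IsCompact K) {Φ : V → F} (hΦ : ContinuousOn Φ K) {X : ℕ → W → V} {Y : W → V}
    (hX : ∀ j, Continuous (X j)) (hXK : ∀ j w, X j w ∈ K) (hYK : ∀ w, Y w ∈ K)
    (hlim : ∀ᵐ w ∂ν, Tendsto (fun j => X j w) atTop (𝓝 (Y w))) :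
    Tendsto (fun j => ∫ w, Φ (X j w) ∂ν) atTop (𝓝 (∫ w, Φ (Y w) ∂ν)) := by
  obtain ⟨B, hB⟩ := hK.exists_bound_of_continuousOn hΦ
  refine tendsto_integral_of_dominated_convergence (fun _ => B)
    (fun j => (hΦ.comp_continuous (hX j) (hXK j)).aestronglyMeasurable) (integrable_const B)
    (fun j => ae_of_all _ fun w => hB _ (hXK j w)) ?_
  filter_upwards [hlim] with w hw
  exact (hΦ _ (hYK w)).tendsto.comp
    (tendsto_nhdsWithin_iff.2 ⟨hw, Eventually.of_forall fun j => hXK j w⟩)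

theorem map_prod_integral_le {E₁ E₂ : Type*} [NormedAddCommGroup E₁] [NormedSpace ℝ E₁]
    [FiniteDimensional ℝ E₁] [MeasurableSpace E₁] [BorelSpace E₁] [NormedAddCommGroup E₂]
    [NormedSpace ℝ E₂] [FiniteDimensional ℝ E₂] [MeasurableSpace E₂] [BorelSpace E₂]
    {ν : Measure (E₁ × E₂)} [IsGaussian ν] (hν : ∫ w, w ∂ν = 0) {c C c' C' : ℝ} {Φ : ℝ × ℝ → ℝ}
    (hΦ : ∀ z ∈ Icc c C ×ˢ Icc c' C', ContDiffAt ℝ 3 Φ z)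
    (hQ : ∀ z ∈ Icc c C ×ˢ Icc c' C', ∀ (a : E₁ →L[ℝ] ℝ) (b : E₂ →L[ℝ] ℝ),
      0 ≤ ∫ w, fderiv ℝ (fderiv ℝ Φ) z (a w.1, b w.2) (a w.1, b w.2) ∂ν)
    {F : E₁ → ℝ} {G : E₂ → ℝ} (hF : Measurable F) (hG : Measurable G)
    (hFmem : ∀ y, F y ∈ Icc c C) (hGmem : ∀ y, G y ∈ Icc c' C') :
    Φ (∫ w, F w.1 ∂ν, ∫ w, G w.2 ∂ν) ≤ ∫ w, Φ (F w.1, G w.2) ∂ν := by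
  set K := Icc c C ×ˢ Icc c' C'
  have hK : IsCompact K := isCompact_Icc.prod isCompact_Icc
  have hKc : Convex ℝ K := (convex_Icc c C).prod (convex_Icc c' C')
  have hΦc : ContinuousOn Φ K := fun z hz => (hΦ z hz).continuousAt.continuousWithinAt
  obtain ⟨f, hf, hflim⟩ := exists_boundedC11_tendsto_ae (μ := ν.map Prod.fst) hF hFmem
  obtain ⟨g, hg, hglim⟩ := exists_boundedC11_tendsto_ae (μ := ν.map Prod.snd) hG hGmem
  set Ψ : ℕ → E₁ × E₂ → ℝ × ℝ := fun j => Prod.map (f j) (g j)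
  have hlim : ∀ᵐ w ∂ν, Tendsto (fun j => Ψ j w) atTop (𝓝 (Prod.map F G w)) := by
    filter_upwards [ae_of_ae_map measurable_fst.aemeasurable hflim,
      ae_of_ae_map measurable_snd.aemeasurable hglim] with w hfw hgw
    exact hfw.prodMk_nhds hgw
  choose M₁ hM₁ using hf
  choose M₂ hM₂ using hg
  have hΨ (j : ℕ) := (hM₁ j).prodMap (hM₂ j)
  have hmem : ∀ w, Prod.map F G w ∈ K := fun w => ⟨hFmem w.1, hGmem w.2⟩
  have hj (j : ℕ) : Φ (∫ w, Ψ j w ∂ν) ≤ ∫ w, Φ (Ψ j w) ∂ν :=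
    map_integral_le_of_boundedC11 hν hK hKc (Submodule.closed_of_finiteDimensional _) hΦ
      (by rintro z hz _ ⟨⟨a, b⟩, -, rfl⟩; exact hQ z hz a b) (hΨ j)
  have hint {X : E₁ × E₂ → ℝ × ℝ} (hX : Measurable X) (hXK : ∀ w, X w ∈ K) : Integrable X ν :=
    integrable_of_forall_mem_isBounded hK.isBounded hX.aestronglyMeasurable hXK
  have hmean {X : E₁ × E₂ → ℝ × ℝ} (hX : Measurable X) (hXK : ∀ w, X w ∈ K) : ∫ w, X w ∂ν ∈ K :=
    hKc.integral_mem hK.isClosed (ae_of_all _ hXK) (hint hX hXK)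
  have hFG : Measurable (Prod.map F G) := by fun_prop
  have hpair : (∫ w, F w.1 ∂ν, ∫ w, G w.2 ∂ν) = ∫ w, Prod.map F G w ∂ν :=
    Prod.ext (fst_integral (hint hFG hmem)).symm (snd_integral (hint hFG hmem)).symm
  have hmeanlim : Tendsto (fun j => ∫ w, Ψ j w ∂ν) atTop (𝓝[K] ∫ w, Prod.map F G w ∂ν) :=
    tendsto_nhdsWithin_iff.2 ⟨tendsto_integral_comp_of_forall_mem hK continuousOn_id
      (fun j => (hΨ j).continuous) (fun j => (hΨ j).mem) hmem hlim,
      Eventually.of_forall fun j => hmean (hΨ j).continuous.measurable (hΨ j).mem⟩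
  rw [hpair]
  exact le_of_tendsto_of_tendsto' ((hΦc _ (hmean hFG hmem)).tendsto.comp hmeanlim)
    (tendsto_integral_comp_of_forall_mem hK hΦc (fun j => (hΨ j).continuous)
      (fun j => (hΨ j).mem) hmem hlim) hj

end Approximation

section PowerProduct

lemma hasFDerivAt_rpow_mul_rpow (α β : ℝ) {z : ℝ × ℝ} (hz₁ : z.1 ≠ 0) (hz₂ : z.2 ≠ 0) :
    HasFDerivAt (fun z : ℝ × ℝ => z.1 ^ α * z.2 ^ β)
      ((α * (z.1 ^ (α - 1) * z.2 ^ β)) • ContinuousLinearMap.fst ℝ ℝ ℝ +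
        (β * (z.1 ^ α * z.2 ^ (β - 1))) • ContinuousLinearMap.snd ℝ ℝ ℝ) z := by
  have h₁ := (hasFDerivAt_fst (𝕜 := ℝ) (p := z)).rpow_const (p := α) (Or.inl hz₁)
  have h₂ := (hasFDerivAt_snd (𝕜 := ℝ) (p := z)).rpow_const (p := β) (Or.inl hz₂)
  refine (h₁.mul h₂).congr_fderiv ?_
  ext <;> simp <;> ring

lemma contDiffAt_rpow_mul_rpow (α β : ℝ) {z : ℝ × ℝ} (hz₁ : z.1 ≠ 0) (hz₂ : z.2 ≠ 0) {n} :
    ContDiffAt ℝ n (fun z : ℝ × ℝ => z.1 ^ α * z.2 ^ β) z :=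
  (contDiffAt_fst.rpow_const_of_ne hz₁).mul (contDiffAt_snd.rpow_const_of_ne hz₂)

lemma fderiv_fderiv_rpow_mul_rpow_apply (α β : ℝ) {z : ℝ × ℝ} (hz₁ : 0 < z.1) (hz₂ : 0 < z.2)
    (x y : ℝ) :
    fderiv ℝ (fderiv ℝ fun z : ℝ × ℝ => z.1 ^ α * z.2 ^ β) z (x, y) (x, y) =
      z.1 ^ α * z.2 ^ β * (α * (α - 1) * (x / z.1) ^ 2 + 2 * (α * β) * (x / z.1) * (y / z.2) +
        β * (β - 1) * (y / z.2) ^ 2) := by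
  have hnhds : ∀ᶠ z' in 𝓝 z, 0 < z'.1 ∧ 0 < z'.2 :=
    (continuousAt_fst.eventually_const_lt hz₁).and (continuousAt_snd.eventually_const_lt hz₂)
  have hfderiv := hnhds.mono fun z' h =>
    (hasFDerivAt_rpow_mul_rpow α β h.1.ne' h.2.ne').fderiv
  have hfst := ((hasFDerivAt_rpow_mul_rpow (α - 1) β hz₁.ne' hz₂.ne').const_mul α).smul_const
    (ContinuousLinearMap.fst ℝ ℝ ℝ)
  have hsnd := ((hasFDerivAt_rpow_mul_rpow α (β - 1) hz₁.ne' hz₂.ne').const_mul β).smul_const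
    (ContinuousLinearMap.snd ℝ ℝ ℝ)
  rw [EventuallyEq.fderiv_eq hfderiv, (hfst.fun_add hsnd).fderiv]
  simp only [rpow_sub_one hz₁.ne', rpow_sub_one hz₂.ne', smul_add, add_apply, smul_apply,
    ContinuousLinearMap.smulRight_apply, ContinuousLinearMap.coe_fst', smul_eq_mul,
    ContinuousLinearMap.coe_snd']
  field_simp
  ring

end PowerProduct

section CorrelatedPair

variable {E : Type*} [NormedAddCommGroup E] [NormedSpace ℝ E] [MeasurableSpace E]

/-- The law of `(σ • W + τ • Z, σ • W)` for independent `W` and `Z` with law `μ`: the positions at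
two successive times of the process started at `0` whose increments are distributed like multiples
of `μ`, the later one first. -/
noncomputable def correlatedPair (μ : Measure E) (σ τ : ℝ) : Measure (E × E) :=
  (μ.prod μ).map fun v => (σ • v.1 + τ • v.2, σ • v.1)

variable [BorelSpace E] [SecondCountableTopology E] {μ : Measure E} {σ τ : ℝ}

lemma integral_correlatedPair {φ : E × E → ℝ} (hφ : Measurable φ) :
    ∫ w, φ w ∂correlatedPair μ σ τ = ∫ v, φ (σ • v.1 + τ • v.2, σ • v.1) ∂μ.prod μ :=
  integral_map (by fun_prop) hφ.aestronglyMeasurable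

lemma integral_correlatedPair_mul [IsFiniteMeasure μ] {f g : E → ℝ} (hf : Measurable f)
    (hg : Measurable g) {c C c' C' : ℝ} (hfmem : ∀ y, f y ∈ Icc c C) (hgmem : ∀ y, g y ∈ Icc c' C')
    (x : E) :
    ∫ w, f (x + w.1) * g (x + w.2) ∂correlatedPair μ σ τ =
      smoothing μ σ (fun y => smoothing μ τ f y * g y) x := by
  have hint : Integrable (fun v : E × E =>
      f (x + (σ • v.1 + τ • v.2)) * g (x + σ • v.1)) (μ.prod μ) := by
    refine integrable_of_forall_mem_isBounded (K := (fun z : ℝ × ℝ => z.1 * z.2) ''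
      (Icc c C ×ˢ Icc c' C')) ?_ (by fun_prop) fun v => ⟨(_, _), ⟨hfmem _, hgmem _⟩, rfl⟩
    exact ((isCompact_Icc.prod isCompact_Icc).image (by fun_prop)).isBounded
  rw [integral_correlatedPair (by fun_prop), integral_prod _ hint]
  simp only [smoothing, integral_mul_const, add_assoc]

lemma integral_snd_correlatedPair [IsProbabilityMeasure μ] {g : E → ℝ} (hg : Measurable g) {c C : ℝ}
    (hgmem : ∀ y, g y ∈ Icc c C) (x : E) :
    ∫ w, g (x + w.2) ∂correlatedPair μ σ τ = smoothing μ σ g x := by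
  simpa [smoothing] using
    integral_correlatedPair_mul (μ := μ) (σ := σ) (τ := τ) measurable_one hg
      (fun _ => ⟨le_rfl, le_rfl⟩) hgmem x

variable [IsGaussian μ]

instance isGaussian_correlatedPair : IsGaussian (correlatedPair μ σ τ) :=
  isGaussian_map ((σ • ContinuousLinearMap.fst ℝ E E + τ • ContinuousLinearMap.snd ℝ E E).prod
    (σ • ContinuousLinearMap.fst ℝ E E))

variable [CompleteSpace E]

lemma integral_id_correlatedPair (hμ : ∫ w, w ∂μ = 0) : ∫ w, w ∂correlatedPair μ σ τ = 0 := by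
  have hi : Integrable (fun w : E × E => w) (correlatedPair μ σ τ) := IsGaussian.integrable_id
  have hid : Integrable (fun w : E => w) μ := IsGaussian.integrable_id
  have hi₁ : Integrable (fun v : E × E => σ • v.1) (μ.prod μ) := (hid.comp_fst μ).smul σ
  have hi₂ : Integrable (fun v : E × E => τ • v.2) (μ.prod μ) := (hid.comp_snd μ).smul τ
  have hmap : AEMeasurable (fun v : E × E => (σ • v.1 + τ • v.2, σ • v.1)) (μ.prod μ) := by
    fun_prop
  have h₁ : ∫ v, σ • v.1 ∂μ.prod μ = 0 := by
    rw [integral_smul, integral_fun_fst (fun w : E => w), hμ, smul_zero, smul_zero]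
  have h₂ : ∫ v, (σ • v.1 + τ • v.2) ∂μ.prod μ = 0 := by
    rw [integral_add hi₁ hi₂, h₁, integral_smul, integral_fun_snd (fun w : E => w), hμ, smul_zero,
      smul_zero, add_zero]
  refine Prod.ext ?_ ?_
  · rw [fst_integral hi]
    exact (integral_map hmap (by fun_prop)).trans h₂
  · rw [snd_integral hi]
    exact (integral_map hmap (by fun_prop)).trans h₁

lemma integral_fst_correlatedPair (hμ : ∫ w, w ∂μ = 0) {f : E → ℝ} (hf : Measurable f) {c C : ℝ}
    (hfmem : ∀ y, f y ∈ Icc c C) (x : E) :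
    ∫ w, f (x + w.1) ∂correlatedPair μ σ τ = smoothing μ √(σ ^ 2 + τ ^ 2) f x := by
  rw [← smoothing_smoothing hμ (Metric.isBounded_Icc c C) hf.stronglyMeasurable hfmem]
  simpa using integral_correlatedPair_mul (μ := μ) (σ := σ) (τ := τ) hf measurable_one hfmem
    (fun _ => ⟨le_rfl, le_rfl⟩) x

lemma integral_linear_mul_linear_prod (hμ : ∫ w, w ∂μ = 0) (a b : E →L[ℝ] ℝ) (r r' s s' : ℝ) :
    ∫ v, a (r • v.1 + r' • v.2) * b (s • v.1 + s' • v.2) ∂μ.prod μ =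
      (r * s + r' * s') * ∫ w, a w * b w ∂μ := by
  have hid : Integrable (fun w : E => w) μ := IsGaussian.integrable_id
  have ha : Integrable a μ := a.integrable_comp hid
  have hb : Integrable b μ := b.integrable_comp hid
  have ha0 : ∫ w, a w ∂μ = 0 := by rw [a.integral_comp_comm hid, hμ, map_zero]
  have hab : Integrable (fun w => a w * b w) μ :=
    (IsGaussian.memLp_dual μ a 2 (by simp)).integrable_mul (IsGaussian.memLp_dual μ b 2 (by simp))
  have hdiag : Integrable (fun v : E × E => r * s * (a v.1 * b v.1) + r' * s' * (a v.2 * b v.2))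
      (μ.prod μ) := ((hab.comp_fst μ).const_mul _).add ((hab.comp_snd μ).const_mul _)
  have hcross : Integrable (fun v : E × E => r * s' * (a v.1 * b v.2) + r' * s * (b v.1 * a v.2))
      (μ.prod μ) := ((ha.mul_prod hb).const_mul _).add ((hb.mul_prod ha).const_mul _)
  have hexpand (v : E × E) : a (r • v.1 + r' • v.2) * b (s • v.1 + s' • v.2) =
      (r * s * (a v.1 * b v.1) + r' * s' * (a v.2 * b v.2)) +
        (r * s' * (a v.1 * b v.2) + r' * s * (b v.1 * a v.2)) := by
    simp only [map_add, map_smul, smul_eq_mul]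
    ring
  simp only [hexpand]
  rw [integral_add hdiag hcross,
    integral_add ((hab.comp_fst μ).const_mul _) ((hab.comp_snd μ).const_mul _),
    integral_add ((ha.mul_prod hb).const_mul _) ((hb.mul_prod ha).const_mul _)]
  simp only [integral_const_mul]
  rw [integral_prod_mul a b, integral_prod_mul b a, ha0, integral_fun_fst fun w => a w * b w,
    integral_fun_snd fun w => a w * b w, probReal_univ, one_smul]
  ring

lemma integral_quadratic {Ω : Type*} [MeasurableSpace Ω] {P : Measure Ω} {X Y : Ω → ℝ}
    (hX : MemLp X 2 P) (hY : MemLp Y 2 P) (A B D : ℝ) :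
    ∫ w, (A * X w ^ 2 + 2 * B * X w * Y w + D * Y w ^ 2) ∂P =
      A * ∫ w, X w * X w ∂P + 2 * B * ∫ w, X w * Y w ∂P + D * ∫ w, Y w * Y w ∂P := by
  have hXX : Integrable (fun w => A * (X w * X w)) P := (hX.integrable_mul hX).const_mul A
  have hXY : Integrable (fun w => 2 * B * (X w * Y w)) P := (hX.integrable_mul hY).const_mul _
  have hYY : Integrable (fun w => D * (Y w * Y w)) P := (hY.integrable_mul hY).const_mul D
  simp only [sq, mul_assoc (2 * B)]
  rw [integral_add (by fun_prop) hYY, integral_add hXX hXY, integral_const_mul,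
    integral_const_mul, integral_const_mul]

lemma quadratic_nonneg {A B D : ℝ} (hA : 0 < A) (hdiscr : B ^ 2 ≤ A * D) (x y : ℝ) :
    0 ≤ A * x ^ 2 + 2 * B * x * y + D * y ^ 2 := by
  refine nonneg_of_mul_nonneg_right ?_ hA
  calc 0 ≤ (A * x + B * y) ^ 2 + (A * D - B ^ 2) * y ^ 2 := by
        have := sub_nonneg.2 hdiscr
        positivity
    _ = A * (A * x ^ 2 + 2 * B * x * y + D * y ^ 2) := by ring

lemma integral_quadratic_correlatedPair_nonneg (hμ : ∫ w, w ∂μ = 0) {A B D : ℝ}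
    (hA : 0 < A * (σ ^ 2 + τ ^ 2))
    (hdiscr : (B * σ ^ 2) ^ 2 ≤ A * (σ ^ 2 + τ ^ 2) * (D * σ ^ 2)) (a b : E →L[ℝ] ℝ) :
    0 ≤ ∫ w, (A * a w.1 ^ 2 + 2 * B * a w.1 * b w.2 + D * b w.2 ^ 2) ∂correlatedPair μ σ τ := by
  have haa := integral_linear_mul_linear_prod hμ a a σ τ σ τ
  have hab := integral_linear_mul_linear_prod hμ a b σ τ σ 0
  have hbb := integral_linear_mul_linear_prod hμ b b σ 0 σ 0
  simp only [zero_smul, add_zero, mul_zero] at hab hbb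
  calc 0 ≤ ∫ w, (A * (σ ^ 2 + τ ^ 2) * a w ^ 2 + 2 * (B * σ ^ 2) * a w * b w +
        D * σ ^ 2 * b w ^ 2) ∂μ :=
        integral_nonneg fun w => quadratic_nonneg hA hdiscr (a w) (b w)
    _ = A * ((σ * σ + τ * τ) * ∫ w, a w * a w ∂μ) + 2 * B * (σ * σ * ∫ w, a w * b w ∂μ) +
        D * (σ * σ * ∫ w, b w * b w ∂μ) := by
        rw [integral_quadratic (IsGaussian.memLp_dual μ a 2 (by simp))
          (IsGaussian.memLp_dual μ b 2 (by simp))]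
        ring
    _ = ∫ w, (A * a w.1 ^ 2 + 2 * B * a w.1 * b w.2 + D * b w.2 ^ 2) ∂correlatedPair μ σ τ := by
        have ha : MemLp (fun w : E × E => a w.1) 2 (correlatedPair μ σ τ) :=
          IsGaussian.memLp_dual _ (a.comp (ContinuousLinearMap.fst ℝ E E)) 2 (by simp)
        have hb : MemLp (fun w : E × E => b w.2) 2 (correlatedPair μ σ τ) :=
          IsGaussian.memLp_dual _ (b.comp (ContinuousLinearMap.snd ℝ E E)) 2 (by simp)
        rw [integral_quadratic ha hb, integral_correlatedPair (by fun_prop),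
          integral_correlatedPair (by fun_prop), integral_correlatedPair (by fun_prop), haa, hab,
          hbb]

end CorrelatedPair

section ReverseHypercontractivity

lemma rpow_mem_Icc {a b u : ℝ} (ha : 0 < a) (hu : u ∈ Icc a b) (q : ℝ) :
    u ^ q ∈ Icc (min (a ^ q) (b ^ q)) (max (a ^ q) (b ^ q)) := by
  have hu0 : 0 < u := ha.trans_le hu.1
  rcases le_total 0 q with hq | hq
  · exact ⟨(min_le_left _ _).trans (rpow_le_rpow ha.le hu.1 hq),
      (rpow_le_rpow hu0.le hu.2 hq).trans (le_max_right _ _)⟩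
  · exact ⟨(min_le_right _ _).trans (rpow_le_rpow_of_nonpos hu0 hu.2 hq),
      (rpow_le_rpow_of_nonpos ha hu.1 hq).trans (le_max_left _ _)⟩

lemma one_div_mul_one_div_sub_one_pos {q : ℝ} (hq : q ≠ 0) (hq' : q < 1) :
    0 < 1 / q * (1 / q - 1) := by
  have hfactor : 1 / q * (1 / q - 1) = (1 - q) / q ^ 2 := by field_simp
  have := sub_pos.2 hq'
  rw [hfactor]
  positivity

lemma le_rpow_of_mul_rpow_one_sub_le {A B p : ℝ} (hB : 0 < B) (h : A * B ^ (1 - p) ≤ B) :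
    A ≤ B ^ p := by
  rw [rpow_sub hB, rpow_one, ← mul_div_assoc, div_le_iff₀ (by positivity), mul_comm] at h
  exact le_of_mul_le_mul_left h hB

variable {E : Type*} [NormedAddCommGroup E] [NormedSpace ℝ E] [FiniteDimensional ℝ E]
  [MeasurableSpace E] [BorelSpace E] {μ : Measure E} [IsGaussian μ] {σ τ : ℝ}

lemma integral_hessian_rpow_mul_rpow_nonneg (hμ : ∫ w, w ∂μ = 0) {α β : ℝ}
    (hA : 0 < α * (α - 1) * (σ ^ 2 + τ ^ 2))
    (hdiscr : (α * β * σ ^ 2) ^ 2 ≤ α * (α - 1) * (σ ^ 2 + τ ^ 2) * (β * (β - 1) * σ ^ 2))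
    {z : ℝ × ℝ} (hz₁ : 0 < z.1) (hz₂ : 0 < z.2) (a b : E →L[ℝ] ℝ) :
    0 ≤ ∫ w, fderiv ℝ (fderiv ℝ fun z : ℝ × ℝ => z.1 ^ α * z.2 ^ β) z
      (a w.1, b w.2) (a w.1, b w.2) ∂correlatedPair μ σ τ := by
  simp only [fderiv_fderiv_rpow_mul_rpow_apply α β hz₁ hz₂, integral_const_mul]
  have h := integral_quadratic_correlatedPair_nonneg hμ hA hdiscr (z.1⁻¹ • a) (z.2⁻¹ • b)
  simp only [smul_apply, smul_eq_mul, inv_mul_eq_div] at h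
  positivity

theorem smoothing_rpow_mul_smoothing_rpow_le (hμ : ∫ w, w ∂μ = 0) {α β : ℝ}
    (hA : 0 < α * (α - 1) * (σ ^ 2 + τ ^ 2))
    (hdiscr : (α * β * σ ^ 2) ^ 2 ≤ α * (α - 1) * (σ ^ 2 + τ ^ 2) * (β * (β - 1) * σ ^ 2))
    {F G : E → ℝ} (hF : Measurable F) (hG : Measurable G) {c C c' C' : ℝ} (hc : 0 < c)
    (hc' : 0 < c') (hFmem : ∀ y, F y ∈ Icc c C) (hGmem : ∀ y, G y ∈ Icc c' C') (x : E) :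
    smoothing μ √(σ ^ 2 + τ ^ 2) F x ^ α * smoothing μ σ G x ^ β ≤
      smoothing μ σ (fun y => smoothing μ τ (fun z => F z ^ α) y * G y ^ β) x := by
  have hpos {z : ℝ × ℝ} (hz : z ∈ Icc c C ×ˢ Icc c' C') : 0 < z.1 ∧ 0 < z.2 :=
    ⟨hc.trans_le hz.1.1, hc'.trans_le hz.2.1⟩
  have h := map_prod_integral_le (ν := correlatedPair μ σ τ) (integral_id_correlatedPair hμ)
    (fun z hz => contDiffAt_rpow_mul_rpow α β (hpos hz).1.ne' (hpos hz).2.ne')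
    (fun z hz => integral_hessian_rpow_mul_rpow_nonneg hμ hA hdiscr (hpos hz).1 (hpos hz).2)
    (F := fun y => F (x + y)) (G := fun y => G (x + y)) (by fun_prop) (by fun_prop)
    (fun y => hFmem _) (fun y => hGmem _)
  rwa [integral_fst_correlatedPair hμ hF hFmem, integral_snd_correlatedPair hG hGmem,
    integral_correlatedPair_mul (f := fun y => F y ^ α) (g := fun y => G y ^ β) (by fun_prop)
      (by fun_prop) (fun y => rpow_mem_Icc hc (hFmem y) α)
      (fun y => rpow_mem_Icc hc' (hGmem y) β)] at h

theorem reverse_hypercontractivity_smoothing (hμ : ∫ w, w ∂μ = 0) (hσ : σ ≠ 0) {q₁ q₂ : ℝ}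
    (hq₁ : q₁ ≠ 0) (hq₁' : q₁ < 1) (hq₂ : q₂ ≠ 0)
    (hrel : (1 - q₂) * σ ^ 2 = (1 - q₁) * (σ ^ 2 + τ ^ 2)) {f : E → ℝ} (hf : Measurable f)
    {a b : ℝ} (ha : 0 < a) (hfmem : ∀ y, f y ∈ Icc a b) (x : E) :
    smoothing μ √(σ ^ 2 + τ ^ 2) (fun y => f y ^ q₁) x ^ (1 / q₁) ≤
      smoothing μ σ (fun y => smoothing μ τ f y ^ q₂) x ^ (1 / q₂) := by
  set h := smoothing μ τ f
  have hh : StronglyMeasurable h := stronglyMeasurable_smoothing hf.stronglyMeasurable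
  have hhmem : ∀ y, h y ∈ Icc a b := smoothing_mem (convex_Icc a b) isClosed_Icc
    (Metric.isBounded_Icc a b) hf.stronglyMeasurable hfmem
  have hb : 0 < b := ha.trans_le ((hfmem x).1.trans (hfmem x).2)
  have hpos (q : ℝ) : 0 < min (a ^ q) (b ^ q) := lt_min (by positivity) (by positivity)
  have hF (y : E) := rpow_mem_Icc ha (hfmem y) q₁
  have hG (y : E) := rpow_mem_Icc ha (hhmem y) q₂
  have hA : 0 < 1 / q₁ * (1 / q₁ - 1) * (σ ^ 2 + τ ^ 2) :=
    mul_pos (one_div_mul_one_div_sub_one_pos hq₁ hq₁') (by positivity)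
  have hdiscr : (1 / q₁ * (1 - 1 / q₂) * σ ^ 2) ^ 2 =
      1 / q₁ * (1 / q₁ - 1) * (σ ^ 2 + τ ^ 2) * ((1 - 1 / q₂) * (1 - 1 / q₂ - 1) * σ ^ 2) := by
    field_simp
    linear_combination (1 - q₂) * hrel
  have hmain := smoothing_rpow_mul_smoothing_rpow_le hμ hA hdiscr.le (hf.pow_const q₁)
    (hh.measurable.pow_const q₂) (hpos q₁) (hpos q₂) hF hG x
  have hfpow : (fun y => (f y ^ q₁) ^ (1 / q₁)) = f := funext fun y => by
    rw [one_div, rpow_rpow_inv (ha.le.trans (hfmem y).1) hq₁]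
  have hhpow (y : E) : h y * (h y ^ q₂) ^ (1 - 1 / q₂) = h y ^ q₂ := by
    have hy : 0 < h y := ha.trans_le (hhmem y).1
    rw [rpow_sub (by positivity), rpow_one, one_div, rpow_rpow_inv hy.le hq₂,
      mul_div_cancel₀ _ hy.ne']
  have hprod : smoothing μ σ (fun y => smoothing μ τ (fun z => (f z ^ q₁) ^ (1 / q₁)) y *
      (h y ^ q₂) ^ (1 - 1 / q₂)) x = smoothing μ σ (fun y => h y ^ q₂) x := by
    simp only [hfpow]
    exact congrArg (smoothing μ σ · x) (funext hhpow)
  rw [hprod] at hmain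
  exact le_rpow_of_mul_rpow_one_sub_le ((hpos q₂).trans_le (smoothing_mem (convex_Icc _ _)
    isClosed_Icc (Metric.isBounded_Icc _ _) (hh.measurable.pow_const q₂).stronglyMeasurable hG x).1)
    hmain

end ReverseHypercontractivity

section Heat

variable {n : ℕ} {t : ℝ}

/-- The Gauss-Weierstrass kernel `(4πt)^(-n/2) exp (-‖y‖² / (4t))` on `ℝⁿ`, whose convolution
semigroup is `heat`. -/
noncomputable def heatKernel (n : ℕ) (t : ℝ) (y : EuclideanSpace ℝ (Fin n)) : ℝ :=
  (4 * π * t) ^ (-(n : ℝ) / 2) * Real.exp (-‖y‖ ^ 2 / (4 * t))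

lemma heatKernel_nonneg (ht : 0 < t) (y : EuclideanSpace ℝ (Fin n)) : 0 ≤ heatKernel n t y := by
  unfold heatKernel
  positivity

lemma measurable_heatKernel : Measurable (heatKernel n t) := by
  unfold heatKernel
  fun_prop

lemma integrable_heatKernel (ht : 0 < t) : Integrable (heatKernel n t) := by
  have h := (GaussianFourier.integrable_cexp_neg_mul_sq_norm_add (V := EuclideanSpace ℝ (Fin n))
    (b := ((1 / (4 * t) : ℝ) : ℂ)) (by simpa using ht) 0 0).norm
  refine (h.congr (ae_of_all _ fun y => ?_)).const_mul _
  have hexp : -((1 / (4 * t) : ℝ) : ℂ) * ‖y‖ ^ 2 + 0 * (inner ℝ 0 y : ℝ) =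
      ((-‖y‖ ^ 2 / (4 * t) : ℝ) : ℂ) := by
    push_cast
    ring
  simp only [hexp, Complex.norm_exp, Complex.ofReal_re]

lemma rpow_neg_mul_cpow_eq_one (ht : 0 < t) (d : ℝ) :
    (((4 * π * t) ^ (-d / 2) : ℝ) : ℂ) * (π / ((1 / (4 * t) : ℝ) : ℂ)) ^ (d / 2 : ℂ) = 1 := by
  have hbase : (π / ((1 / (4 * t) : ℝ) : ℂ)) ^ (d / 2 : ℂ) =
      (((4 * π * t) ^ (d / 2) : ℝ) : ℂ) := by
    rw [Complex.ofReal_cpow (by positivity)]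
    push_cast
    congr 1
    field_simp
  rw [hbase, ← Complex.ofReal_mul, ← rpow_add (by positivity), neg_div, neg_add_cancel,
    rpow_zero, Complex.ofReal_one]

lemma integral_heatKernel_smul_cexp (ht : 0 < t) (ξ : EuclideanSpace ℝ (Fin n)) :
    ∫ y, heatKernel n t y • Complex.exp (inner ℝ y ξ * Complex.I) =
      Complex.exp (-(t * ‖ξ‖ ^ 2 : ℝ)) := by
  have hintegrand (y : EuclideanSpace ℝ (Fin n)) :
      heatKernel n t y • Complex.exp (inner ℝ y ξ * Complex.I) =
        (((4 * π * t) ^ (-(n : ℝ) / 2) : ℝ) : ℂ) * Complex.exp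
          (-((1 / (4 * t) : ℝ) : ℂ) * ‖y‖ ^ 2 + Complex.I * (inner ℝ ξ y : ℝ)) := by
    rw [heatKernel, Complex.real_smul, Complex.ofReal_mul, Complex.ofReal_exp, mul_assoc,
      ← Complex.exp_add, real_inner_comm]
    congr 2
    push_cast
    ring
  have hconst := rpow_neg_mul_cpow_eq_one ht n
  simp_rw [hintegrand]
  rw [integral_const_mul, GaussianFourier.integral_cexp_neg_mul_sq_norm_add (by simpa using ht),
    finrank_euclideanSpace_fin, ← mul_assoc, ← Complex.ofReal_natCast, hconst, one_mul,
    Complex.I_sq]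
  congr 1
  push_cast
  have : (t : ℂ) ≠ 0 := mod_cast ht.ne'
  field_simp

lemma withDensity_heatKernel (ht : 0 < t) :
    volume.withDensity (fun y => ENNReal.ofReal (heatKernel n t y)) =
      (stdGaussian (EuclideanSpace ℝ (Fin n))).map (√(2 * t) • ·) := by
  have : IsFiniteMeasure (volume.withDensity fun y => ENNReal.ofReal (heatKernel n t y)) :=
    isFiniteMeasure_withDensity_ofReal (integrable_heatKernel ht).2
  have : IsProbabilityMeasure ((stdGaussian (EuclideanSpace ℝ (Fin n))).map (√(2 * t) • ·)) :=
    Measure.isProbabilityMeasure_map (by fun_prop)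
  refine Measure.ext_of_charFun (funext fun ξ => ?_)
  rw [charFun_map_smul, charFun_stdGaussian, charFun_apply,
    integral_withDensity_eq_integral_toReal_smul measurable_heatKernel.ennreal_ofReal (by simp)]
  simp_rw [ENNReal.toReal_ofReal (heatKernel_nonneg ht _)]
  rw [integral_heatKernel_smul_cexp ht, norm_smul, Real.norm_of_nonneg (sqrt_nonneg _),
    ← Complex.ofReal_pow, mul_pow, sq_sqrt (by positivity)]
  congr 1
  push_cast
  ring

lemma heat_eq_integral_heatKernel (ht : t ≠ 0) (f : EuclideanSpace ℝ (Fin n) → ℝ)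
    (x : EuclideanSpace ℝ (Fin n)) : heat n t f x = ∫ u, heatKernel n t u * f (x + u) := by
  rw [heat, if_neg ht, ← integral_const_mul, ← integral_add_left_eq_self _ x]
  refine integral_congr_ae (ae_of_all _ fun u => ?_)
  simp only [heatKernel, sub_add_cancel_left, norm_neg]
  ring

lemma heat_eq_smoothing (ht : 0 ≤ t) {f : EuclideanSpace ℝ (Fin n) → ℝ} (hf : Measurable f) :
    heat n t f = smoothing (stdGaussian (EuclideanSpace ℝ (Fin n))) √(2 * t) f := by
  rcases ht.eq_or_lt with rfl | ht
  · simp [funext_iff, heat, smoothing]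
  ext x
  calc heat n t f x = ∫ u, heatKernel n t u * f (x + u) := heat_eq_integral_heatKernel ht.ne' f x
    _ = ∫ u, f (x + u) ∂volume.withDensity fun y => ENNReal.ofReal (heatKernel n t y) := by
        rw [integral_withDensity_eq_integral_toReal_smul measurable_heatKernel.ennreal_ofReal
          (by simp)]
        simp only [ENNReal.toReal_ofReal (heatKernel_nonneg ht _), smul_eq_mul]
    _ = smoothing (stdGaussian (EuclideanSpace ℝ (Fin n))) √(2 * t) f x := by
        rw [withDensity_heatKernel ht, smoothing,
          integral_map (by fun_prop) (Measurable.aestronglyMeasurable (by fun_prop))]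

theorem local_reverse_hypercontractivity_heat_general (n : ℕ) {s t : ℝ} (hs : 0 < s)
    (hst : s ≤ t) {q₁ q₂ : ℝ} (hq₁ : q₁ ≠ 0) (hq₁' : q₁ < 1) (hq₂ : q₂ ≠ 0)
    (hrel : (q₂ - 1) / (q₁ - 1) = t / s) {f : EuclideanSpace ℝ (Fin n) → ℝ} (hf : Measurable f)
    {a b : ℝ} (ha : 0 < a) (hab : ∀ x, a ≤ f x ∧ f x ≤ b) (x : EuclideanSpace ℝ (Fin n)) :
    (heat n t (fun y => f y ^ q₁) x) ^ (1 / q₁) ≤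
      (heat n s (fun y => heat n (t - s) f y ^ q₂) x) ^ (1 / q₂) := by
  have hts : 0 ≤ t - s := sub_nonneg.2 hst
  have hσ : √(2 * s) ^ 2 = 2 * s := sq_sqrt (by positivity)
  have hτ : √(2 * (t - s)) ^ 2 = 2 * (t - s) := sq_sqrt (by positivity)
  have hστ : √(2 * s) ^ 2 + √(2 * (t - s)) ^ 2 = 2 * t := by rw [hσ, hτ]; ring
  have hrel' : (1 - q₂) * √(2 * s) ^ 2 = (1 - q₁) * (√(2 * s) ^ 2 + √(2 * (t - s)) ^ 2) := by
    have := (div_eq_div_iff (by linarith) hs.ne').1 hrel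
    rw [hστ, hσ]
    linear_combination -2 * this
  have hmeas := (stronglyMeasurable_smoothing (ν := stdGaussian (EuclideanSpace ℝ (Fin n)))
    (r := √(2 * (t - s))) hf.stronglyMeasurable).measurable
  have h := reverse_hypercontractivity_smoothing (μ := stdGaussian (EuclideanSpace ℝ (Fin n)))
    (by simp) (sqrt_pos.2 (by positivity)).ne' hq₁ hq₁' hq₂ hrel' hf ha hab x
  rwa [hστ, ← heat_eq_smoothing (hs.le.trans hst) (hf.pow_const q₁),
    ← heat_eq_smoothing hs.le (hmeas.pow_const q₂), ← heat_eq_smoothing hts hf] at h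

end Heat

theorem local_reverse_hypercontractivity_heat (n : ℕ) (hn : 1 ≤ n)
    (s t : ℝ) (hs : 0 < s) (hst : s ≤ t)
    (q₁ q₂ : ℝ) (hq : q₂ ≤ q₁)
    (hq' : (0 < q₂ ∧ q₁ < 1) ∨ q₁ < 0)
    (hrel : (q₂ - 1) / (q₁ - 1) = t / s)
    (f : EuclideanSpace ℝ (Fin n) → ℝ) (hf : Measurable f)
    (a b : ℝ) (ha : 0 < a) (hab : ∀ x, a ≤ f x ∧ f x ≤ b)
    (x : EuclideanSpace ℝ (Fin n)) :
    (heat n t (fun y => f y ^ q₁) x) ^ (1 / q₁) ≤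
      (heat n s (fun y => heat n (t - s) f y ^ q₂) x) ^ (1 / q₂) := by
  rcases hq' with ⟨hq₂, hq₁⟩ | hq₁
  · exact local_reverse_hypercontractivity_heat_general n hs hst (hq₂.trans_le hq).ne' hq₁ hq₂.ne'
      hrel hf ha hab x
  · exact local_reverse_hypercontractivity_heat_general n hs hst hq₁.ne (hq₁.trans one_pos)
      (hq.trans_lt hq₁).ne hrel hf ha hab x
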